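/- Let 1 ≤ p ≤ q ≤ n be integers and μ = (n−p)^p. Then for every real x the following identity of convergent power series holds: Σ_{ℓ ≥ p(n−p)} ((px)^ℓ/ℓ!) · E^{ℓ,p}( 1_{λ⊇μ} · H(λ) ) = (∏_{i=1}^p (q−i)!/(n−i)!) · x^{p(n−p)} · Σ_{k=0}^∞ x^k Σ_{κ ⊢ k} (p)_κ (q)_κ / ((h^κ)² (n)_κ), where the inner sum is over all partitions κ of k. -/

import Mathlib

open MeasureTheory Filter Real
open scoped BigOperators Topology

noncomputable section

/-- Hook length of the (0-indexed) cell `c` in the Young diagram `μ`. -/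
def hookLen (μ : YoungDiagram) (c : ℕ × ℕ) : ℕ :=
  μ.rowLen c.1 + μ.colLen c.2 - c.1 - c.2 - 1

/-- Product of all hook lengths of `μ`. -/
def hookProd (μ : YoungDiagram) : ℕ := ∏ c ∈ μ.cells, hookLen μ c

/-- Number of semistandard Young tableaux of shape `μ` with entries in `{0, …, q-1}`. -/
def numSSYT (μ : YoungDiagram) (q : ℕ) : ℕ :=
  Set.ncard {T : SemistandardYoungTableau μ | ∀ c ∈ μ.cells, T c.1 c.2 < q}

/-- Number of standard Young tableaux of shape `μ`, via the hook length formula. -/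
def fSYT (μ : YoungDiagram) : ℝ := (Nat.factorial μ.card : ℝ) / (hookProd μ : ℝ)

/-- The probability `P^{ℓ,p}` of a partition `μ` of `ℓ`. -/
def Pword (ℓ p : ℕ) (μ : YoungDiagram) : ℝ :=
  fSYT μ * (numSSYT μ p : ℝ) / (p : ℝ) ^ ℓ

/-- The expectation `E^{ℓ,p}` of a function `g` of the partition. -/
def Eword (ℓ p : ℕ) (g : YoungDiagram → ℝ) : ℝ :=
  ∑' μ : YoungDiagram, if μ.card = ℓ then Pword ℓ p μ * g μ else 0

/-- The expectation `E_{x,p}` with respect to the Poissonized measure `P_{x,p}`. -/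
def Epois (x : ℝ) (p : ℕ) (g : YoungDiagram → ℝ) : ℝ :=
  ∑' μ : YoungDiagram,
    Real.exp (-(p * x)) * (p * x) ^ μ.card / (Nat.factorial μ.card : ℝ) *
      Pword μ.card p μ * g μ

/-- Pochhammer symbol `(x)_m = x (x+1) ⋯ (x+m-1)`. -/
def pochRe (x : ℝ) (m : ℕ) : ℝ := ∏ j ∈ Finset.range m, (x + j)

/-- `(x)_κ = ∏_i (x + 1 - i)_{κ_i}` (with `i` 1-indexed). -/
def pochPart (x : ℝ) (μ : YoungDiagram) : ℝ :=
  ∏ i ∈ Finset.range (μ.colLen 0), pochRe (x - i) (μ.rowLen i)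

/-- Strip hook product `H(λ) = ∏_{(i,j) ∈ λ, n-q < j ≤ n-p} h^λ_{ij}` (1-indexed `j`). -/
def Hstrip (n p q : ℕ) (μ : YoungDiagram) : ℕ :=
  ∏ c ∈ μ.cells.filter (fun c => n - q ≤ c.2 ∧ c.2 < n - p), hookLen μ c

/-- The indicator `1_{λ ⊇ (n-p)^p}`. -/
def indSup (n p : ℕ) (μ : YoungDiagram) : ℝ :=
  if ∀ i < p, n - p ≤ μ.rowLen i then 1 else 0

/-- Vandermonde determinant `Δ_p(x) = ∏_{i<j} (x_i - x_j)`. -/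
def vdm {p : ℕ} (x : Fin p → ℝ) : ℝ :=
  ∏ i : Fin p, ∏ j ∈ Finset.Ioi i, (x i - x j)

/-!
Write `l_i(N) = κ_i + N - i` for a partition `κ` with at most `p` parts. The hook product, the
number of semistandard tableaux and the symbols `(N)_κ` are quotients of products of the
factorials `l_i(N)!` and of the Vandermonde product `∏_{i<j} (l_i(p) - l_j(p))`:

* the hook lengths in row `i` and the differences `l_i(p) - l_k(p)`, `k > i`, partition
  `{1, …, l_i(p)}`;
* the determinant of `(-1)^j * (l_i(p) choose j)` and the number of tableaux satisfy the same
  recursion, which removes the cells with the largest entry.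

The partitions `λ ⊇ (n - p)^p` with at most `p` parts arise from such a `κ` by adding `n - p`
columns of length `p`. This turns `l_i(p)` into `l_i(n)` and preserves the Vandermonde product,
while the strip hook product of `λ` is `∏ l_i(q)! / l_i(p)!`. Hence the terms for `λ` and `κ` of the
two series agree up to the factor `x^{p(n-p)} ∏ (q-i)! / (n-i)!`. Finally, the term for `κ` is at
most `∏ (p|x|)^{κ_i} / κ_i!` in absolute value, so both series converge absolutely and can be
summed by the size of the partition.
-/

section

open Finset
open scoped Nat

section RowLengths

variable {p : ℕ} {μ ν : YoungDiagram}

lemma lt_colLen_iff_lt_rowLen {i j : ℕ} : i < μ.colLen j ↔ j < μ.rowLen i := by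
  rw [← YoungDiagram.mem_iff_lt_colLen, YoungDiagram.mem_iff_lt_rowLen]

lemma rowLen_bot (i : ℕ) : (⊥ : YoungDiagram).rowLen i = 0 :=
  Nat.eq_zero_of_not_pos fun h =>
    YoungDiagram.notMem_bot (i, 0) (YoungDiagram.mem_iff_lt_rowLen.2 h)

lemma rowLen_eq_zero_of_le (hμ : μ.rowLen p = 0) {i : ℕ} (hi : p ≤ i) : μ.rowLen i = 0 :=
  Nat.eq_zero_of_le_zero (hμ ▸ μ.rowLen_anti p i hi)

lemma lt_of_lt_rowLen (hμ : μ.rowLen p = 0) {i j : ℕ} (h : j < μ.rowLen i) : i < p := by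
  by_contra! hi
  simp [rowLen_eq_zero_of_le hμ hi] at h

lemma colLen_le_of_rowLen_eq_zero (hμ : μ.rowLen p = 0) (j : ℕ) : μ.colLen j ≤ p := by
  by_contra! h
  exact lt_irrefl p (lt_of_lt_rowLen hμ (lt_colLen_iff_lt_rowLen.1 h))

lemma le_of_rowLen_le (h : ∀ i, ν.rowLen i ≤ μ.rowLen i) : ν ≤ μ := by
  rintro ⟨i, j⟩ hij
  exact YoungDiagram.mem_iff_lt_rowLen.2 ((YoungDiagram.mem_iff_lt_rowLen.1 hij).trans_le (h i))

lemma eq_of_rowLen_eq (hμ : μ.rowLen p = 0) (hν : ν.rowLen p = 0)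
    (h : ∀ i : Fin p, μ.rowLen i = ν.rowLen i) : μ = ν := by
  have rows_eq (i : ℕ) : μ.rowLen i = ν.rowLen i := by
    rcases lt_or_ge i p with hi | hi
    · exact h ⟨i, hi⟩
    · rw [rowLen_eq_zero_of_le hμ hi, rowLen_eq_zero_of_le hν hi]
  exact le_antisymm (le_of_rowLen_le fun i => (rows_eq i).le)
    (le_of_rowLen_le fun i => (rows_eq i).ge)

@[to_additive]
lemma prod_cells_eq_prod_rows {M : Type*} [CommMonoid M] (hμ : μ.rowLen p = 0) (f : ℕ × ℕ → M) :
    ∏ c ∈ μ.cells, f c = ∏ i : Fin p, ∏ j ∈ range (μ.rowLen i), f (i, j) := by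
  rw [Fin.prod_univ_eq_prod_range (fun i => ∏ j ∈ range (μ.rowLen i), f (i, j))]
  refine prod_finset_product _ _ _ fun ⟨i, j⟩ => ?_
  rw [YoungDiagram.mem_cells, YoungDiagram.mem_iff_lt_rowLen, mem_range, mem_range]
  exact ⟨fun h => ⟨lt_of_lt_rowLen hμ h, h⟩, And.right⟩

lemma card_eq_sum_rowLen (hμ : μ.rowLen p = 0) : μ.card = ∑ i : Fin p, μ.rowLen i := by
  simpa using sum_cells_eq_sum_rows hμ fun _ => (1 : ℕ)

/-- The Young diagram whose first `p` rows have lengths `f 0, …, f (p - 1)`, with no further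
rows. Unlike in `YoungDiagram.equivListRowLens`, some of the `f i` may vanish. -/
def ofRows (f : Fin p → ℕ) (hf : Antitone f) : YoungDiagram :=
  YoungDiagram.ofRowLens (List.ofFn f) (List.sortedGE_ofFn_iff.2 hf)

lemma rowLen_ofRows (f : Fin p → ℕ) (hf : Antitone f) (i : Fin p) :
    (ofRows f hf).rowLen i = f i := by
  refine eq_of_forall_lt_iff fun j => ?_
  rw [← YoungDiagram.mem_iff_lt_rowLen, ofRows, YoungDiagram.mem_ofRowLens]
  simp

lemma rowLen_ofRows_self (f : Fin p → ℕ) (hf : Antitone f) : (ofRows f hf).rowLen p = 0 := by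
  refine Nat.eq_zero_of_not_pos fun h => ?_
  rw [← YoungDiagram.mem_iff_lt_rowLen, ofRows, YoungDiagram.mem_ofRowLens] at h
  simp at h

end RowLengths

section ShiftedRows

variable {p : ℕ} {μ ν : YoungDiagram}

/-- The shifted row lengths `μ_i + N - i` (with `i` 1-indexed), which form a strictly decreasing
sequence for `i ≤ N`. -/
def shiftedRow (N : ℕ) (μ : YoungDiagram) (i : ℕ) : ℕ := μ.rowLen i + (N - (i + 1))

lemma shiftedRow_strictAnti (p : ℕ) (μ : YoungDiagram) :
    StrictAnti fun i : Fin p => shiftedRow p μ i := by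
  intro i k hik
  have := μ.rowLen_anti i k hik.le
  simp only [shiftedRow]
  omega

lemma eq_of_shiftedRow_eq (hμ : μ.rowLen p = 0) (hν : ν.rowLen p = 0)
    (h : ∀ i : Fin p, shiftedRow p μ i = shiftedRow p ν i) : μ = ν :=
  eq_of_rowLen_eq hμ hν fun i => Nat.add_right_cancel (h i)

lemma vdm_pos_of_strictAnti {x : Fin p → ℝ} (hx : StrictAnti x) : 0 < vdm x :=
  prod_pos fun _ _ => prod_pos fun _ hk => sub_pos.2 (hx (mem_Ioi.1 hk))

lemma vdm_shiftedRow_pos (p : ℕ) (μ : YoungDiagram) :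
    0 < vdm fun i : Fin p => (shiftedRow p μ i : ℝ) :=
  vdm_pos_of_strictAnti fun _ _ hik => Nat.cast_lt.2 (shiftedRow_strictAnti p μ hik)

/-- The product `∏_{i=1}^p (μ_i + N - i)!`. -/
def shiftedRowFactorial (p N : ℕ) (μ : YoungDiagram) : ℝ := ∏ i : Fin p, ((shiftedRow N μ i)! : ℝ)

lemma shiftedRowFactorial_pos (p N : ℕ) (μ : YoungDiagram) : 0 < shiftedRowFactorial p N μ :=
  prod_pos fun _ _ => Nat.cast_pos.2 (Nat.factorial_pos _)

lemma shiftedRowFactorial_bot (p N : ℕ) :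
    shiftedRowFactorial p N ⊥ = ∏ i : Fin p, ((N - (i + 1))! : ℝ) := by
  simp only [shiftedRowFactorial, shiftedRow, rowLen_bot, zero_add]

end ShiftedRows

section HookLengths

variable {p : ℕ} {μ : YoungDiagram}

lemma hookLen_pos {c : ℕ × ℕ} (hc : c ∈ μ) : 0 < hookLen μ c := by
  have hrow := YoungDiagram.mem_iff_lt_rowLen.1 hc
  have hcol := YoungDiagram.mem_iff_lt_colLen.1 hc
  simp only [hookLen]
  omega

lemma hookProd_pos (μ : YoungDiagram) : 0 < hookProd μ :=
  prod_pos fun c hc => hookLen_pos ((YoungDiagram.mem_cells c).1 hc)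

lemma hookLen_strictAntiOn_row (μ : YoungDiagram) (i : ℕ) :
    StrictAntiOn (fun j => hookLen μ (i, j)) (range (μ.rowLen i)) := by
  intro j _ j' hj' hjj'
  have hcol := lt_colLen_iff_lt_rowLen.2 (mem_range.1 hj')
  have hanti := μ.colLen_anti j j' hjj'.le
  have hrow := mem_range.1 hj'
  simp only [hookLen]
  omega

lemma shiftedRow_sub_injOn (μ : YoungDiagram) (i : Fin p) :
    Set.InjOn (fun k : Fin p => shiftedRow p μ i - shiftedRow p μ k) (Ioi i) := by
  intro k hk k' hk' h
  have hk := shiftedRow_strictAnti p μ (mem_Ioi.1 hk)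
  have hk' := shiftedRow_strictAnti p μ (mem_Ioi.1 hk')
  refine (shiftedRow_strictAnti p μ).injective ?_
  simp only at h hk hk' ⊢
  omega

lemma disjoint_hookLen_row_shiftedRow_sub (μ : YoungDiagram) (i : Fin p) :
    Disjoint ((range (μ.rowLen i)).image fun j => hookLen μ (i, j))
      ((Ioi i).image fun k : Fin p => shiftedRow p μ i - shiftedRow p μ k) := by
  simp only [Finset.disjoint_left, mem_image, mem_range, mem_Ioi, not_exists, not_and]
  rintro _ ⟨j, hj, rfl⟩ k _ h
  have hcol := lt_colLen_iff_lt_rowLen.2 hj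
  have cell_iff : (k : ℕ) < μ.colLen j ↔ j < μ.rowLen k := lt_colLen_iff_lt_rowLen
  simp only [hookLen, shiftedRow] at h
  omega

lemma hookLen_row_union_shiftedRow_sub (hμ : μ.rowLen p = 0) (i : Fin p) :
    ((range (μ.rowLen i)).image fun j => hookLen μ (i, j)) ∪
      ((Ioi i).image fun k : Fin p => shiftedRow p μ i - shiftedRow p μ k) =
        Icc 1 (shiftedRow p μ i) := by
  apply eq_of_subset_of_card_le
  · simp only [union_subset_iff, image_subset_iff, mem_range, mem_Ioi, mem_Icc]
    refine ⟨fun j hj => ⟨hookLen_pos (YoungDiagram.mem_iff_lt_rowLen.2 hj), ?_⟩,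
      fun k hik => ⟨Nat.sub_pos_of_lt (shiftedRow_strictAnti p μ hik), Nat.sub_le _ _⟩⟩
    have := colLen_le_of_rowLen_eq_zero hμ j
    simp only [hookLen, shiftedRow]
    omega
  · rw [card_union_of_disjoint (disjoint_hookLen_row_shiftedRow_sub μ i),
      card_image_of_injOn (hookLen_strictAntiOn_row μ i).injOn,
      card_image_of_injOn (shiftedRow_sub_injOn μ i), card_range, Fin.card_Ioi, Nat.card_Icc,
      shiftedRow]
    omega

lemma prod_hookLen_row_mul_prod_shiftedRow_sub (hμ : μ.rowLen p = 0) (i : Fin p) :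
    (∏ j ∈ range (μ.rowLen i), hookLen μ (i, j)) *
      ∏ k ∈ Ioi i, (shiftedRow p μ i - shiftedRow p μ k) = (shiftedRow p μ i)! := by
  rw [← prod_Ico_id_eq_factorial, Ico_add_one_right_eq_Icc, ← hookLen_row_union_shiftedRow_sub hμ,
    prod_union (disjoint_hookLen_row_shiftedRow_sub μ i),
    prod_image (hookLen_strictAntiOn_row μ i).injOn, prod_image (shiftedRow_sub_injOn μ i)]

lemma hookProd_mul_vdm (hμ : μ.rowLen p = 0) :
    (hookProd μ : ℝ) * vdm (fun i : Fin p => (shiftedRow p μ i : ℝ)) =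
      shiftedRowFactorial p p μ := by
  rw [hookProd, prod_cells_eq_prod_rows hμ, vdm, shiftedRowFactorial]
  push_cast
  rw [← prod_mul_distrib]
  refine prod_congr rfl fun i _ => ?_
  rw [← prod_hookLen_row_mul_prod_shiftedRow_sub hμ i]
  push_cast
  congr 1
  exact prod_congr rfl fun k hk =>
    (Nat.cast_sub (shiftedRow_strictAnti p μ (mem_Ioi.1 hk)).le).symm

lemma hookProd_eq_div (hμ : μ.rowLen p = 0) :
    (hookProd μ : ℝ) =
      shiftedRowFactorial p p μ / vdm fun i : Fin p => (shiftedRow p μ i : ℝ) :=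
  eq_div_of_mul_eq (vdm_shiftedRow_pos p μ).ne' (hookProd_mul_vdm hμ)

lemma prod_factorial_rowLen_le_hookProd (hμ : μ.rowLen p = 0) :
    ∏ i : Fin p, (μ.rowLen i)! ≤ hookProd μ := by
  rw [hookProd, prod_cells_eq_prod_rows hμ]
  refine prod_le_prod' fun i _ => ?_
  rw [← prod_range_add_one_eq_factorial, ← prod_range_reflect]
  refine prod_le_prod' fun j hj => ?_
  have hrow := mem_range.1 hj
  have hcol := lt_colLen_iff_lt_rowLen.2 hrow
  simp only [hookLen]
  omega

end HookLengths

/-- The Young diagrams `ν` and `μ` interlace: `μ₁ ≥ ν₁ ≥ μ₂ ≥ ν₂ ≥ ⋯`. Equivalently, `μ / ν` is a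
horizontal strip. -/
def Interlaces (ν μ : YoungDiagram) : Prop :=
  ∀ i, μ.rowLen (i + 1) ≤ ν.rowLen i ∧ ν.rowLen i ≤ μ.rowLen i

namespace Interlaces

variable {μ ν : YoungDiagram}

lemma le (h : Interlaces ν μ) : ν ≤ μ :=
  le_of_rowLen_le fun i => (h i).2

lemma mem_of_succ_mem (h : Interlaces ν μ) {i j : ℕ} (hij : (i + 1, j) ∈ μ) : (i, j) ∈ ν :=
  YoungDiagram.mem_iff_lt_rowLen.2 ((YoungDiagram.mem_iff_lt_rowLen.1 hij).trans_le (h i).1)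

end Interlaces

lemma finite_setOf_interlaces (μ : YoungDiagram) : {ν | Interlaces ν μ}.Finite := by
  have cells_injective : Function.Injective YoungDiagram.cells := fun _ _ => YoungDiagram.ext
  refine (μ.cells.powerset.finite_toSet.preimage cells_injective.injOn).subset fun ν hν => ?_
  simpa using hν.le

section Tableaux

variable {p : ℕ} {μ ν : YoungDiagram}

/-- The semistandard tableaux of shape `μ` with entries `< p`, which `numSSYT μ p` counts. -/
def boundedSSYT (μ : YoungDiagram) (p : ℕ) : Set (SemistandardYoungTableau μ) :=
  {T | ∀ c ∈ μ.cells, T c.1 c.2 < p}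

lemma mem_boundedSSYT {T : SemistandardYoungTableau μ} :
    T ∈ boundedSSYT μ p ↔ ∀ i j, (i, j) ∈ μ → T i j < p := by
  simp [boundedSSYT]

lemma ncard_boundedSSYT (μ : YoungDiagram) (p : ℕ) : (boundedSSYT μ p).ncard = numSSYT μ p := rfl

lemma finite_boundedSSYT (μ : YoungDiagram) (p : ℕ) : (boundedSSYT μ p).Finite := by
  let entries (T : boundedSSYT μ p) (c : μ.cells) : Fin p := ⟨T.1 c.1.1 c.1.2, T.2 c.1 c.2⟩
  refine Set.finite_coe_iff.1 (Finite.of_injective entries fun T T' h => ?_)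
  refine Subtype.ext (SemistandardYoungTableau.ext fun i j => ?_)
  by_cases hij : (i, j) ∈ μ
  · simpa [entries] using congrFun h ⟨(i, j), (YoungDiagram.mem_cells _).2 hij⟩
  · rw [T.1.zeros hij, T'.1.zeros hij]

lemma ssyt_entry_mono (T : SemistandardYoungTableau μ) {i j i' j' : ℕ} (hi : i ≤ i') (hj : j ≤ j')
    (h : (i', j') ∈ μ) : T i j ≤ T i' j' :=
  (T.col_weak hi (μ.up_left_mem le_rfl hj h)).trans (T.row_weak_of_le hj h)

lemma le_ssyt_entry (T : SemistandardYoungTableau μ) {i j : ℕ} (h : (i, j) ∈ μ) : i ≤ T i j := by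
  induction i with
  | zero => exact Nat.zero_le _
  | succ i ih =>
    exact (ih (μ.up_left_mem i.le_succ le_rfl h)).trans_lt (T.col_strict i.lt_succ_self h)

lemma numSSYT_eq_zero (hμ : μ.rowLen p ≠ 0) : numSSYT μ p = 0 := by
  have hcell : (p, 0) ∈ μ := YoungDiagram.mem_iff_lt_rowLen.2 (Nat.pos_of_ne_zero hμ)
  rw [← ncard_boundedSSYT, Set.ncard_eq_zero (finite_boundedSSYT μ p),
    Set.eq_empty_iff_forall_notMem]
  exact fun T hT => (mem_boundedSSYT.1 hT _ _ hcell).not_ge (le_ssyt_entry T hcell)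

lemma numSSYT_zero (hμ : μ.rowLen 0 = 0) : numSSYT μ 0 = 1 := by
  have no_cell (i j : ℕ) : (i, j) ∉ μ := fun h =>
    Nat.not_lt_zero i (lt_of_lt_rowLen hμ (YoungDiagram.mem_iff_lt_rowLen.1 h))
  rw [← ncard_boundedSSYT, Set.ncard_eq_one]
  refine ⟨.highestWeight μ, Set.eq_singleton_iff_unique_mem.2
    ⟨mem_boundedSSYT.2 fun i j h => absurd h (no_cell i j), fun T _ => ?_⟩⟩
  ext i j
  rw [T.zeros (no_cell i j), SemistandardYoungTableau.zeros _ (no_cell i j)]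

/-- The subdiagram formed by the cells of `T` with entry `< p`. -/
def sublevelDiagram (p : ℕ) (T : SemistandardYoungTableau μ) : YoungDiagram where
  cells := μ.cells.filter fun c => T c.1 c.2 < p
  isLowerSet := by
    rintro ⟨i, j⟩ ⟨i', j'⟩ ⟨hi, hj⟩ h
    simp only [coe_filter, YoungDiagram.mem_cells, Set.mem_ofPred_eq] at *
    exact ⟨μ.up_left_mem hi hj h.1, (ssyt_entry_mono T hi hj h.1).trans_lt h.2⟩

lemma mem_sublevelDiagram {T : SemistandardYoungTableau μ} {i j : ℕ} :
    (i, j) ∈ sublevelDiagram p T ↔ (i, j) ∈ μ ∧ T i j < p := by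
  rw [← YoungDiagram.mem_cells]
  simp [sublevelDiagram]

lemma sublevelDiagram_interlaces {T : SemistandardYoungTableau μ} (hT : T ∈ boundedSSYT μ (p + 1)) :
    Interlaces (sublevelDiagram p T) μ := by
  refine fun i => ⟨le_of_forall_lt fun j hj => ?_, le_of_forall_lt fun j hj => ?_⟩ <;>
    rw [← YoungDiagram.mem_iff_lt_rowLen] at hj ⊢
  · refine mem_sublevelDiagram.2 ⟨μ.up_left_mem i.le_succ le_rfl hj, ?_⟩
    have hbelow := mem_boundedSSYT.1 hT _ _ hj
    have hstrict := T.col_strict (Nat.lt_add_one i) hj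
    omega
  · exact (mem_sublevelDiagram.1 hj).1

/-- The restriction of a tableau of shape `μ` to a smaller shape `ν`. -/
def restrictSSYT (h : ν ≤ μ) (T : SemistandardYoungTableau μ) : SemistandardYoungTableau ν where
  entry i j := if (i, j) ∈ ν then T i j else 0
  row_weak' hj hν := by
    rw [if_pos hν, if_pos (ν.up_left_mem le_rfl hj.le hν)]
    exact T.row_weak hj (h hν)
  col_strict' hi hν := by
    rw [if_pos hν, if_pos (ν.up_left_mem hi.le le_rfl hν)]
    exact T.col_strict hi (h hν)
  zeros' hν := if_neg hν

lemma restrictSSYT_apply (h : ν ≤ μ) (T : SemistandardYoungTableau μ) (i j : ℕ) :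
    restrictSSYT h T i j = if (i, j) ∈ ν then T i j else 0 := rfl

/-- The extension of a tableau of shape `ν` with entries `< p` to the shape `μ`, filling the
horizontal strip `μ / ν` with the entry `p`. -/
def extendSSYT (h : Interlaces ν μ) (S : SemistandardYoungTableau ν) (hS : S ∈ boundedSSYT ν p) :
    SemistandardYoungTableau μ where
  entry i j := if (i, j) ∈ ν then S i j else if (i, j) ∈ μ then p else 0
  row_weak' {i j j'} hj hμ := by
    by_cases hν : (i, j') ∈ ν
    · rw [if_pos hν, if_pos (ν.up_left_mem le_rfl hj.le hν)]
      exact S.row_weak hj hν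
    · rw [if_neg hν, if_pos hμ, if_pos (μ.up_left_mem le_rfl hj.le hμ)]
      split_ifs with hν'
      · exact (mem_boundedSSYT.1 hS _ _ hν').le
      · exact le_rfl
  col_strict' {i i' j} hi hμ := by
    have hν : (i, j) ∈ ν := h.mem_of_succ_mem (μ.up_left_mem hi le_rfl hμ)
    rw [if_pos hν]
    by_cases hν' : (i', j) ∈ ν
    · rw [if_pos hν']
      exact S.col_strict hi hν'
    · rw [if_neg hν', if_pos hμ]
      exact mem_boundedSSYT.1 hS _ _ hν
  zeros' hμ := by rw [if_neg fun hν => hμ (h.le hν), if_neg hμ]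

lemma extendSSYT_apply (h : Interlaces ν μ) (S : SemistandardYoungTableau ν)
    (hS : S ∈ boundedSSYT ν p) (i j : ℕ) :
    extendSSYT h S hS i j = if (i, j) ∈ ν then S i j else if (i, j) ∈ μ then p else 0 := rfl

lemma extendSSYT_mem_boundedSSYT (h : Interlaces ν μ) (S : SemistandardYoungTableau ν)
    (hS : S ∈ boundedSSYT ν p) : extendSSYT h S hS ∈ boundedSSYT μ (p + 1) := by
  refine mem_boundedSSYT.2 fun i j hμ => ?_
  rw [extendSSYT_apply, if_pos hμ]
  split_ifs with hν
  · exact (mem_boundedSSYT.1 hS _ _ hν).trans p.lt_succ_self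
  · exact p.lt_succ_self

lemma sublevelDiagram_extendSSYT (h : Interlaces ν μ) (S : SemistandardYoungTableau ν)
    (hS : S ∈ boundedSSYT ν p) : sublevelDiagram p (extendSSYT h S hS) = ν := by
  ext ⟨i, j⟩
  rw [YoungDiagram.mem_cells, YoungDiagram.mem_cells, mem_sublevelDiagram, extendSSYT_apply]
  by_cases hν : (i, j) ∈ ν
  · simp [hν, h.le hν, mem_boundedSSYT.1 hS _ _ hν]
  · by_cases hμ : (i, j) ∈ μ <;> simp [hν, hμ]

lemma restrictSSYT_extendSSYT (h : Interlaces ν μ) (S : SemistandardYoungTableau ν)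
    (hS : S ∈ boundedSSYT ν p) : restrictSSYT h.le (extendSSYT h S hS) = S := by
  ext i j
  rw [restrictSSYT_apply, extendSSYT_apply]
  split_ifs with hν
  · rfl
  · rw [S.zeros hν]

lemma extendSSYT_restrictSSYT (h : Interlaces ν μ) {T : SemistandardYoungTableau μ}
    (hT : T ∈ boundedSSYT μ (p + 1)) (hν : sublevelDiagram p T = ν)
    (hS : restrictSSYT h.le T ∈ boundedSSYT ν p) : extendSSYT h (restrictSSYT h.le T) hS = T := by
  ext i j
  rw [extendSSYT_apply, restrictSSYT_apply]
  split_ifs with hijν hijμ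
  · rfl
  · have hlt := mem_boundedSSYT.1 hT _ _ hijμ
    have hge : ¬ T i j < p := fun hlt => hijν (hν ▸ mem_sublevelDiagram.2 ⟨hijμ, hlt⟩)
    omega
  · rw [T.zeros hijμ]

lemma restrictSSYT_mem_boundedSSYT (h : ν ≤ μ) {T : SemistandardYoungTableau μ}
    (hν : sublevelDiagram p T = ν) : restrictSSYT h T ∈ boundedSSYT ν p := by
  refine mem_boundedSSYT.2 fun i j hij => ?_
  rw [restrictSSYT_apply, if_pos hij]
  exact (mem_sublevelDiagram.1 (hν ▸ hij)).2

lemma ncard_setOf_sublevelDiagram_eq (h : Interlaces ν μ) :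
    {T ∈ boundedSSYT μ (p + 1) | sublevelDiagram p T = ν}.ncard = numSSYT ν p := by
  rw [← ncard_boundedSSYT]
  refine Set.ncard_congr (fun T _ => restrictSSYT h.le T)
    (fun T hT => restrictSSYT_mem_boundedSSYT h.le hT.2) ?_ ?_
  · intro T T' hT hT' heq
    have hS := restrictSSYT_mem_boundedSSYT h.le hT.2
    have hS' := restrictSSYT_mem_boundedSSYT h.le hT'.2
    rw [← extendSSYT_restrictSSYT h hT.1 hT.2 hS, ← extendSSYT_restrictSSYT h hT'.1 hT'.2 hS']
    simp only [heq]
  · exact fun S hS => ⟨extendSSYT h S hS, ⟨extendSSYT_mem_boundedSSYT h S hS,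
      sublevelDiagram_extendSSYT h S hS⟩, restrictSSYT_extendSSYT h S hS⟩

/-- Branching rule: remove from each tableau the cells that contain the largest entry. -/
lemma numSSYT_succ (μ : YoungDiagram) (p : ℕ) :
    numSSYT μ (p + 1) = ∑ ν ∈ (finite_setOf_interlaces μ).toFinset, numSSYT ν p := by
  classical
  have hfin := finite_boundedSSYT μ (p + 1)
  rw [← ncard_boundedSSYT, Set.ncard_eq_toFinset_card _ hfin,
    card_eq_sum_card_fiberwise (f := sublevelDiagram p) (t := (finite_setOf_interlaces μ).toFinset)
      fun T hT => by simpa using sublevelDiagram_interlaces (by simpa using hT)]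
  refine sum_congr rfl fun ν hν => ?_
  rw [← ncard_setOf_sublevelDiagram_eq ((finite_setOf_interlaces μ).mem_toFinset.1 hν),
    ← Set.ncard_coe_finset]
  simp

end Tableaux

section WeylDimension

variable {p : ℕ}

/-- The determinant of the matrix `(-1)^j * (l_i choose j)`, where the signs make it nonnegative
for decreasing `l`. Up to the factor `∏ j!` it is the Vandermonde determinant of `l`. -/
def binomialDet (l : Fin p → ℕ) : ℝ :=
  (Matrix.of fun i j : Fin p => (-1 : ℝ) ^ (j : ℕ) * (l i).choose j).det

lemma prod_factorial_mul_binomialDet (l : Fin p → ℕ) :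
    (∏ j : Fin p, ((j : ℕ)! : ℝ)) * binomialDet l = vdm fun i => (l i : ℝ) := by
  have entry_eq (i j : Fin p) : (ascPochhammer ℝ (j : ℕ)).eval (-(l i : ℝ)) =
      ((j : ℕ)! : ℝ) * ((-1) ^ (j : ℕ) * (l i).choose j) := by
    rw [ascPochhammer_eval_neg_eq_descPochhammer, descPochhammer_eval_eq_descFactorial,
      Nat.descFactorial_eq_factorial_mul_choose, Nat.cast_mul]
    ring
  have det_eq := Matrix.det_eval_matrixOfPolynomials_eq_det_vandermonde (fun i => -(l i : ℝ))
    (fun j : Fin p => ascPochhammer ℝ j) (fun _ => ascPochhammer_natDegree ℝ _)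
    (fun _ => monic_ascPochhammer ℝ _)
  simp only [entry_eq, Matrix.det_vandermonde, sub_neg_eq_add, neg_add_eq_sub] at det_eq
  rw [vdm, det_eq, binomialDet, ← Matrix.det_mul_row]
  rfl

lemma sum_Ico_choose {R : Type*} [Ring R] {a b : ℕ} (h : a ≤ b) (j : ℕ) :
    ∑ m ∈ Ico a b, (m.choose j : R) = b.choose (j + 1) - a.choose (j + 1) := by
  rw [← sum_Ico_sub (fun m => (m.choose (j + 1) : R)) h]
  refine sum_congr rfl fun m _ => ?_
  rw [Nat.choose_succ_succ, Nat.cast_add, add_sub_cancel_right]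

/-- Subtracting consecutive rows turns each row into a sum of binomial rows of size `p`. -/
lemma binomialDet_succ (l : Fin (p + 1) → ℕ) (hl : Antitone l) :
    binomialDet l = ∑ m ∈ Fintype.piFinset fun i : Fin p => Ico (l i.succ) (l i.castSucc),
      binomialDet m := by
  let M : Matrix (Fin (p + 1)) (Fin (p + 1)) ℝ :=
    .of fun i j => (-1) ^ (j : ℕ) * (l i).choose j
  let D : Matrix (Fin (p + 1)) (Fin (p + 1)) ℝ :=
    .of (Fin.cons (M 0) fun i : Fin p => M i.succ - M i.castSucc)
  let row (m : ℕ) (j : Fin p) : ℝ := (-1) ^ (j : ℕ) * m.choose j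
  have det_eq : M.det = D.det :=
    Matrix.det_eq_of_forall_row_eq_smul_add_pred (fun _ => 1) (by simp [D]) (by simp [D])
  have D_zero_zero : D 0 0 = 1 := by simp [D, M]
  have D_succ_zero (i : Fin p) : D i.succ 0 = 0 := by simp [D, M]
  have minor_eq : D.submatrix (Fin.succAbove 0) Fin.succ =
      fun i : Fin p => ∑ m ∈ Ico (l i.succ) (l i.castSucc), row m := by
    ext i j
    rw [Finset.sum_apply, ← mul_sum, sum_Ico_choose (hl i.castSucc_lt_succ.le)]
    simp only [D, M, Matrix.submatrix_apply, Fin.zero_succAbove, Matrix.of_apply, Fin.cons_succ,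
      Pi.sub_apply, Fin.val_succ]
    ring
  calc binomialDet l = D.det := det_eq
    _ = (D.submatrix (Fin.succAbove 0) Fin.succ).det := by
      simp [Matrix.det_succ_column_zero, Fin.sum_univ_succ, D_zero_zero, D_succ_zero]
    _ = ∑ m ∈ Fintype.piFinset fun i : Fin p => Ico (l i.succ) (l i.castSucc), binomialDet m := by
      rw [minor_eq]
      exact Matrix.detRowAlternating.toMultilinearMap.map_sum_finset (fun _ => row) _

lemma shiftedRow_mem_Ico_of_interlaces {μ ν : YoungDiagram} (h : Interlaces ν μ) (i : Fin p) :
    shiftedRow p ν i ∈ Ico (shiftedRow (p + 1) μ i.succ) (shiftedRow (p + 1) μ i.castSucc) := by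
  have := h i
  simp only [mem_Ico, shiftedRow, Fin.val_succ, Fin.val_castSucc]
  omega

lemma exists_interlaces_shiftedRow_eq {μ : YoungDiagram} (hμ : μ.rowLen (p + 1) = 0)
    {m : Fin p → ℕ} (hm : ∀ i : Fin p,
      m i ∈ Ico (shiftedRow (p + 1) μ i.succ) (shiftedRow (p + 1) μ i.castSucc)) :
    ∃ ν, Interlaces ν μ ∧ ν.rowLen p = 0 ∧ ∀ i : Fin p, shiftedRow p ν i = m i := by
  have m_bounds (i : Fin p) : μ.rowLen (i + 1) + (p - (i + 1)) ≤ m i ∧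
      m i ≤ μ.rowLen i + (p - (i + 1)) := by
    have := hm i
    simp only [mem_Ico, shiftedRow, Fin.val_succ, Fin.val_castSucc] at this
    omega
  have hanti : Antitone fun i : Fin p => m i - (p - (i + 1)) := by
    refine antitone_iff_forall_lt.2 fun i k hik => ?_
    have hi := m_bounds i
    have hk := m_bounds k
    have := μ.rowLen_anti (i + 1) k hik
    omega
  refine ⟨ofRows _ hanti, fun i => ?_, rowLen_ofRows_self _ _, fun i => ?_⟩
  · rcases lt_or_ge i p with hi | hi
    · have := m_bounds ⟨i, hi⟩
      rw [rowLen_ofRows _ _ ⟨i, hi⟩]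
      simp only at this ⊢
      omega
    · simp [rowLen_eq_zero_of_le hμ (Nat.succ_le_succ hi),
        rowLen_eq_zero_of_le (rowLen_ofRows_self _ hanti) hi]
  · have := m_bounds i
    rw [shiftedRow, rowLen_ofRows]
    omega

/-- Both sides satisfy the recursion that enumerates Gelfand–Tsetlin patterns. -/
lemma numSSYT_eq_binomialDet {μ : YoungDiagram} (hμ : μ.rowLen p = 0) :
    (numSSYT μ p : ℝ) = binomialDet fun i : Fin p => shiftedRow p μ i := by
  induction p generalizing μ with
  | zero => simp [numSSYT_zero hμ, binomialDet]
  | succ p ih =>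
    rw [numSSYT_succ, binomialDet_succ _ (shiftedRow_strictAnti (p + 1) μ).antitone, Nat.cast_sum,
      ← sum_filter_of_ne (p := fun ν : YoungDiagram => ν.rowLen p = 0) fun ν _ hne =>
        by_contra fun hν => hne (by rw [numSSYT_eq_zero hν, Nat.cast_zero])]
    refine sum_nbij (fun ν (i : Fin p) => shiftedRow p ν i) ?_ ?_ ?_ ?_
    · intro ν hν
      have hν := (finite_setOf_interlaces μ).mem_toFinset.1 (mem_filter.1 hν).1
      exact Fintype.mem_piFinset.2 (shiftedRow_mem_Ico_of_interlaces hν)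
    · exact fun ν hν ν' hν' heq =>
        eq_of_shiftedRow_eq (mem_filter.1 hν).2 (mem_filter.1 hν').2 (congrFun heq)
    · intro m hm
      obtain ⟨ν, hν, hν0, hm⟩ := exists_interlaces_shiftedRow_eq hμ (Fintype.mem_piFinset.1 hm)
      exact ⟨ν, by simp [hν, hν0], funext hm⟩
    · exact fun ν hν => ih (mem_filter.1 hν).2

lemma numSSYT_eq_div {μ : YoungDiagram} (hμ : μ.rowLen p = 0) :
    (numSSYT μ p : ℝ) =
      (vdm fun i : Fin p => (shiftedRow p μ i : ℝ)) / shiftedRowFactorial p p ⊥ := by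
  have stair_eq : shiftedRowFactorial p p ⊥ = ∏ j : Fin p, ((j : ℕ)! : ℝ) := by
    rw [shiftedRowFactorial_bot, ← Equiv.prod_comp Fin.revPerm]
    refine prod_congr rfl fun j _ => ?_
    rw [Fin.revPerm_apply, Fin.val_rev]
    congr
    omega
  rw [eq_div_iff (shiftedRowFactorial_pos p p ⊥).ne', stair_eq, numSSYT_eq_binomialDet hμ, mul_comm,
    prod_factorial_mul_binomialDet]

end WeylDimension

section Pochhammer

variable {p N : ℕ} {μ : YoungDiagram}

lemma pochRe_natCast (k m : ℕ) : pochRe k m = k.ascFactorial m := by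
  simp [pochRe, Nat.ascFactorial_eq_prod_range]

lemma pochRe_natCast_sub {i : ℕ} (hi : i < N) (m : ℕ) :
    pochRe (N - i) m = ((m + (N - (i + 1)))! : ℝ) / (N - (i + 1))! := by
  have hsub : (N : ℝ) - i = ((N - (i + 1) + 1 : ℕ) : ℝ) := by
    rw [← Nat.cast_sub hi.le]
    congr 1
    omega
  rw [eq_div_iff (Nat.cast_ne_zero.2 (Nat.factorial_ne_zero _)), hsub, pochRe_natCast, mul_comm,
    add_comm m, ← Nat.factorial_mul_ascFactorial, Nat.cast_mul]

lemma pochRe_pos {x : ℝ} (hx : 0 < x) (m : ℕ) : 0 < pochRe x m :=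
  prod_pos fun _ _ => by positivity

lemma pochRe_le_pochRe {x y : ℝ} (hx : 0 ≤ x) (hxy : x ≤ y) (m : ℕ) : pochRe x m ≤ pochRe y m :=
  prod_le_prod (fun _ _ => by positivity) fun _ _ => by gcongr

lemma pochRe_le_pow_mul_factorial {x : ℝ} (hx : 1 ≤ x) (m : ℕ) : pochRe x m ≤ x ^ m * m ! := by
  have factor_le (j : ℕ) : x + j ≤ x * (j + 1) := by nlinarith [j.cast_nonneg (α := ℝ)]
  calc pochRe x m ≤ ∏ j ∈ range m, x * (j + 1) :=
        prod_le_prod (fun _ _ => by positivity) fun j _ => factor_le j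
    _ = x ^ m * m ! := by
      rw [prod_mul_distrib, prod_const, card_range, ← prod_range_add_one_eq_factorial]
      push_cast
      rfl

lemma pochPart_eq_prod (hμ : μ.rowLen p = 0) (x : ℝ) :
    pochPart x μ = ∏ i : Fin p, pochRe (x - i) (μ.rowLen i) := by
  rw [pochPart, Fin.prod_univ_eq_prod_range fun i => pochRe (x - i) (μ.rowLen i)]
  refine prod_subset (range_subset_range.2 (colLen_le_of_rowLen_eq_zero hμ 0)) fun i _ hi => ?_
  rw [mem_range, lt_colLen_iff_lt_rowLen, Nat.pos_iff_ne_zero, not_not] at hi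
  rw [hi, pochRe, prod_range_zero]

lemma pochPart_natCast_eq_zero (hμ : μ.rowLen p ≠ 0) : pochPart p μ = 0 := by
  have hpos : 0 < μ.rowLen p := Nat.pos_of_ne_zero hμ
  refine prod_eq_zero (mem_range.2 (lt_colLen_iff_lt_rowLen.2 hpos)) ?_
  exact prod_eq_zero (mem_range.2 hpos) (by simp)

lemma pochPart_natCast_eq_div (hpN : p ≤ N) (hμ : μ.rowLen p = 0) :
    pochPart N μ = shiftedRowFactorial p N μ / shiftedRowFactorial p N ⊥ := by
  rw [pochPart_eq_prod hμ, shiftedRowFactorial_bot, shiftedRowFactorial, ← prod_div_distrib]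
  exact prod_congr rfl fun i _ => pochRe_natCast_sub (i.2.trans_le hpN) _

lemma pochPart_natCast_pos (hpN : p ≤ N) (hμ : μ.rowLen p = 0) : 0 < pochPart N μ := by
  rw [pochPart_natCast_eq_div hpN hμ]
  exact div_pos (shiftedRowFactorial_pos p N μ) (shiftedRowFactorial_pos p N ⊥)

lemma pochPart_le_pochPart {x y : ℝ} (hμ : μ.rowLen p = 0) (hpx : p ≤ x) (hxy : x ≤ y) :
    pochPart x μ ≤ pochPart y μ := by
  rw [pochPart_eq_prod hμ, pochPart_eq_prod hμ]
  have x_sub_pos (i : Fin p) : 0 < x - i := sub_pos.2 ((Nat.cast_lt.2 i.2).trans_le hpx)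
  exact prod_le_prod (fun i _ => (pochRe_pos (x_sub_pos i) _).le) fun i _ =>
    pochRe_le_pochRe (x_sub_pos i).le (by gcongr) _

lemma pochPart_natCast_le (hμ : μ.rowLen p = 0) :
    pochPart p μ ≤ ∏ i : Fin p, (p : ℝ) ^ μ.rowLen i * (μ.rowLen i)! := by
  rw [pochPart_eq_prod hμ]
  have p_sub_pos (i : Fin p) : (0 : ℝ) < p - i := sub_pos.2 (Nat.cast_lt.2 i.2)
  refine prod_le_prod (fun i _ => (pochRe_pos (p_sub_pos i) _).le) fun i _ => ?_
  exact (pochRe_le_pochRe (p_sub_pos i).le (sub_le_self _ i.val.cast_nonneg) _).trans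
    (pochRe_le_pow_mul_factorial (Nat.one_le_cast.2 (Nat.one_le_of_lt i.2)) _)

end Pochhammer

section AddColumns

variable {p m : ℕ} {μ ν : YoungDiagram}

/-- The Young diagram obtained from the first `p` rows of `μ` by adding `m` columns of length
`p` on the left. -/
def addColumns (p m : ℕ) (μ : YoungDiagram) : YoungDiagram :=
  ofRows (fun i : Fin p => μ.rowLen i + m) fun i k hik =>
    Nat.add_le_add_right (μ.rowLen_anti i k hik) m

lemma rowLen_addColumns (m : ℕ) (μ : YoungDiagram) (i : Fin p) :
    (addColumns p m μ).rowLen i = μ.rowLen i + m :=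
  rowLen_ofRows _ _ i

lemma rowLen_addColumns_self (p m : ℕ) (μ : YoungDiagram) : (addColumns p m μ).rowLen p = 0 :=
  rowLen_ofRows_self _ _

lemma mem_addColumns {i j : ℕ} : (i, j) ∈ addColumns p m μ ↔ i < p ∧ j < μ.rowLen i + m := by
  rw [YoungDiagram.mem_iff_lt_rowLen]
  constructor
  · intro h
    have hi := lt_of_lt_rowLen (rowLen_addColumns_self p m μ) h
    exact ⟨hi, rowLen_addColumns m μ ⟨i, hi⟩ ▸ h⟩
  · exact fun ⟨hi, hj⟩ => (rowLen_addColumns m μ ⟨i, hi⟩).symm ▸ hj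

lemma colLen_addColumns (μ : YoungDiagram) {j : ℕ} (hj : j < m) :
    (addColumns p m μ).colLen j = p := by
  refine eq_of_forall_lt_iff fun i => ?_
  rw [← YoungDiagram.mem_iff_lt_colLen, mem_addColumns, and_iff_left_iff_imp]
  omega

lemma card_addColumns (hμ : μ.rowLen p = 0) (m : ℕ) :
    (addColumns p m μ).card = μ.card + p * m := by
  simp [card_eq_sum_rowLen hμ, card_eq_sum_rowLen (rowLen_addColumns_self p m μ),
    rowLen_addColumns, sum_add_distrib]

lemma addColumns_injOn (p m : ℕ) : Set.InjOn (addColumns p m) {μ | μ.rowLen p = 0} :=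
  fun μ hμ ν hν h => eq_of_rowLen_eq hμ hν fun i => by
    simpa [rowLen_addColumns] using congrArg (fun lam => YoungDiagram.rowLen lam i) h

lemma exists_addColumns_eq (hν : ν.rowLen p = 0) (hm : ∀ i < p, m ≤ ν.rowLen i) :
    ∃ μ, μ.rowLen p = 0 ∧ addColumns p m μ = ν := by
  have hanti : Antitone fun i : Fin p => ν.rowLen i - m := fun i k hik =>
    Nat.sub_le_sub_right (ν.rowLen_anti i k hik) m
  refine ⟨ofRows _ hanti, rowLen_ofRows_self _ _,
    eq_of_rowLen_eq (rowLen_addColumns_self p m _) hν fun i => ?_⟩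
  rw [rowLen_addColumns, rowLen_ofRows, Nat.sub_add_cancel (hm i i.2)]

lemma shiftedRow_add (N m : ℕ) (μ : YoungDiagram) {i : ℕ} (hi : i < N) :
    shiftedRow (N + m) μ i = shiftedRow N μ i + m := by
  simp only [shiftedRow]
  omega

lemma shiftedRow_addColumns (m : ℕ) (μ : YoungDiagram) (i : Fin p) :
    shiftedRow p (addColumns p m μ) i = shiftedRow p μ i + m := by
  rw [shiftedRow, rowLen_addColumns, shiftedRow, add_right_comm]

lemma shiftedRowFactorial_addColumns (p m : ℕ) (μ : YoungDiagram) :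
    shiftedRowFactorial p p (addColumns p m μ) = shiftedRowFactorial p (p + m) μ :=
  prod_congr rfl fun i _ => by rw [shiftedRow_addColumns, shiftedRow_add p m μ i.2]

lemma vdm_add_const (x : Fin p → ℝ) (c : ℝ) : (vdm fun i => x i + c) = vdm x := by
  simp only [vdm, add_sub_add_right_eq_sub]

lemma vdm_shiftedRow_addColumns (p m : ℕ) (μ : YoungDiagram) :
    (vdm fun i : Fin p => (shiftedRow p (addColumns p m μ) i : ℝ)) =
      vdm fun i : Fin p => (shiftedRow p μ i : ℝ) := by
  simp only [shiftedRow_addColumns, Nat.cast_add, vdm_add_const]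

lemma hookLen_addColumns (μ : YoungDiagram) (i : Fin p) {j : ℕ} (hj : j < m) :
    hookLen (addColumns p m μ) (i, j) = shiftedRow p μ i + (m - j) := by
  rw [hookLen, rowLen_addColumns, colLen_addColumns μ hj, shiftedRow]
  omega

lemma prod_Ico_sub_mul_factorial (d M r : ℕ) :
    (∏ j ∈ Ico M (M + r), (d + (M + r - j))) * d ! = (d + r)! := by
  rw [prod_Ico_eq_prod_range, Nat.add_sub_cancel_left, ← Nat.factorial_mul_ascFactorial,
    Nat.ascFactorial_eq_prod_range, ← prod_range_reflect, mul_comm]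
  congr 1
  refine prod_congr rfl fun j hj => ?_
  have := mem_range.1 hj
  omega

lemma Hstrip_addColumns_eq_prod {q n : ℕ} (μ : YoungDiagram) :
    Hstrip n p q (addColumns p (n - p) μ) =
      ∏ i : Fin p, ∏ j ∈ Ico (n - q) (n - p), hookLen (addColumns p (n - p) μ) (i, j) := by
  rw [Hstrip, Fin.prod_univ_eq_prod_range fun i =>
    ∏ j ∈ Ico (n - q) (n - p), hookLen (addColumns p (n - p) μ) (i, j)]
  refine prod_finset_product _ _ _ fun ⟨i, j⟩ => ?_
  rw [mem_filter, YoungDiagram.mem_cells, mem_addColumns, mem_range, mem_Ico]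
  omega

lemma Hstrip_addColumns {q n : ℕ} (hpq : p ≤ q) (hqn : q ≤ n) (μ : YoungDiagram) :
    (Hstrip n p q (addColumns p (n - p) μ) : ℝ) =
      shiftedRowFactorial p q μ / shiftedRowFactorial p p μ := by
  obtain ⟨r, rfl⟩ := Nat.exists_eq_add_of_le hpq
  obtain ⟨M, rfl⟩ := Nat.exists_eq_add_of_le hqn
  rw [eq_div_iff (shiftedRowFactorial_pos p p μ).ne', Hstrip_addColumns_eq_prod,
    shiftedRowFactorial, shiftedRowFactorial, Nat.cast_prod, ← prod_mul_distrib]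
  refine prod_congr rfl fun i _ => ?_
  rw [shiftedRow_add p r μ i.2, ← prod_Ico_sub_mul_factorial _ M r, Nat.cast_mul,
    show p + r + M - (p + r) = M by omega, show p + r + M - p = M + r by omega]
  congr 2
  exact prod_congr rfl fun j hj => hookLen_addColumns μ i (mem_Ico.1 hj).2

lemma indSup_addColumns (p n : ℕ) (μ : YoungDiagram) : indSup n p (addColumns p (n - p) μ) = 1 :=
  if_pos fun i hi => by
    rw [rowLen_addColumns (n - p) μ ⟨i, hi⟩]
    exact Nat.le_add_left _ _

end AddColumns

section Coefficients

variable {p q n : ℕ} {μ ν : YoungDiagram}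

/-- The contribution of `κ` to the coefficient of `x^|κ|` in the hypergeometric series
`₂F₁(p, q; n; x)` on the right-hand side. -/
def hypergeomCoeff (p q n : ℕ) (κ : YoungDiagram) : ℝ :=
  pochPart p κ * pochPart q κ / ((hookProd κ : ℝ) ^ 2 * pochPart n κ)

/-- The contribution of `lam` to the coefficient of `x^|lam|` in the generating function of the
expectations: the factor `p^ℓ / ℓ!` cancels in `P^{ℓ,p}(lam)` and leaves `s_lam(1^p) / h^lam`. -/
def wordCoeff (p q n : ℕ) (lam : YoungDiagram) : ℝ :=
  numSSYT lam p / hookProd lam * (indSup n p lam * Hstrip n p q lam)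

lemma hypergeomCoeff_eq_zero (q n : ℕ) (hμ : μ.rowLen p ≠ 0) : hypergeomCoeff p q n μ = 0 := by
  rw [hypergeomCoeff, pochPart_natCast_eq_zero hμ, zero_mul, zero_div]

lemma exists_addColumns_eq_of_wordCoeff_ne_zero (h : wordCoeff p q n ν ≠ 0) :
    ∃ μ, μ.rowLen p = 0 ∧ addColumns p (n - p) μ = ν := by
  refine exists_addColumns_eq (by_contra fun hν => h ?_) (by_contra fun hsub => h ?_)
  · rw [wordCoeff, numSSYT_eq_zero hν, Nat.cast_zero, zero_div, zero_mul]
  · rw [wordCoeff, indSup, if_neg hsub, zero_mul, mul_zero]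

lemma wordCoeff_eq_zero_of_card_lt (q : ℕ) (h : ν.card < p * (n - p)) : wordCoeff p q n ν = 0 := by
  by_contra hne
  obtain ⟨μ, hμ, rfl⟩ := exists_addColumns_eq_of_wordCoeff_ne_zero hne
  rw [card_addColumns hμ] at h
  omega

lemma prod_Icc_factorial_div (p q n : ℕ) :
    ∏ i ∈ Icc 1 p, ((q - i)! : ℝ) / ((n - i)! : ℝ) =
      shiftedRowFactorial p q ⊥ / shiftedRowFactorial p n ⊥ := by
  rw [shiftedRowFactorial_bot, shiftedRowFactorial_bot, ← prod_div_distrib,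
    Fin.prod_univ_eq_prod_range fun i => ((q - (i + 1))! : ℝ) / ((n - (i + 1))! : ℝ),
    ← Ico_add_one_right_eq_Icc, prod_Ico_eq_prod_range, Nat.add_sub_cancel]
  exact prod_congr rfl fun i _ => by rw [add_comm 1 i]

lemma wordCoeff_addColumns (hpq : p ≤ q) (hqn : q ≤ n) (hμ : μ.rowLen p = 0) :
    wordCoeff p q n (addColumns p (n - p) μ) =
      (∏ i ∈ Icc 1 p, ((q - i)! : ℝ) / ((n - i)! : ℝ)) * hypergeomCoeff p q n μ := by
  have hpn := hpq.trans hqn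
  have hlam := rowLen_addColumns_self p (n - p) μ
  have hvdm := (vdm_shiftedRow_pos p μ).ne'
  have hq := (shiftedRowFactorial_pos p q ⊥).ne'
  have hn := (shiftedRowFactorial_pos p n ⊥).ne'
  rw [prod_Icc_factorial_div, wordCoeff, hypergeomCoeff, numSSYT_eq_div hlam, hookProd_eq_div hlam,
    indSup_addColumns, Hstrip_addColumns hpq hqn, vdm_shiftedRow_addColumns,
    shiftedRowFactorial_addColumns, Nat.add_sub_cancel' hpn, hookProd_eq_div hμ,
    pochPart_natCast_eq_div le_rfl hμ, pochPart_natCast_eq_div hpq hμ,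
    pochPart_natCast_eq_div hpn hμ]
  field_simp

lemma hypergeomCoeff_nonneg (hpq : p ≤ q) (hqn : q ≤ n) (hμ : μ.rowLen p = 0) :
    0 ≤ hypergeomCoeff p q n μ := by
  have hP := pochPart_natCast_pos le_rfl hμ
  have hQ := pochPart_natCast_pos hpq hμ
  have hN := pochPart_natCast_pos (hpq.trans hqn) hμ
  rw [hypergeomCoeff]
  positivity

lemma hypergeomCoeff_le (hpq : p ≤ q) (hqn : q ≤ n) (hμ : μ.rowLen p = 0) :
    hypergeomCoeff p q n μ ≤ ∏ i : Fin p, (p : ℝ) ^ μ.rowLen i / (μ.rowLen i)! := by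
  have hQ := pochPart_natCast_pos hpq hμ
  have hN := pochPart_natCast_pos (hpq.trans hqn) hμ
  have poch_le : pochPart (q : ℝ) μ ≤ pochPart n μ :=
    pochPart_le_pochPart hμ (Nat.cast_le.2 hpq) (Nat.cast_le.2 hqn)
  have fact_le : ∏ i : Fin p, ((μ.rowLen i)! : ℝ) ≤ hookProd μ := by
    exact_mod_cast prod_factorial_rowLen_le_hookProd hμ
  have poch_p_le := pochPart_natCast_le hμ
  have fact_pos : 0 < ∏ i : Fin p, ((μ.rowLen i)! : ℝ) := by positivity
  rw [prod_mul_distrib] at poch_p_le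
  rw [prod_div_distrib, hypergeomCoeff]
  set A := ∏ i : Fin p, ((μ.rowLen i)! : ℝ)
  set B := ∏ i : Fin p, (p : ℝ) ^ μ.rowLen i
  calc pochPart p μ * pochPart q μ / ((hookProd μ : ℝ) ^ 2 * pochPart n μ)
      ≤ B * A * pochPart n μ / (A ^ 2 * pochPart n μ) := by gcongr
    _ = B / A := by field_simp

end Coefficients

section Summation

variable {p q n : ℕ}

lemma summable_pi_prod_of_nonneg {α : Type*} {f : α → ℝ} (hf : Summable f) (hf0 : ∀ a, 0 ≤ f a)
    (p : ℕ) : Summable fun v : Fin p → α => ∏ i, f (v i) := by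
  induction p with
  | zero => exact .of_finite
  | succ p ih =>
    rw [← (Fin.consEquiv fun _ : Fin (p + 1) => α).summable_iff]
    refine (hf.mul_of_nonneg ih hf0 fun v => prod_nonneg fun i _ => hf0 (v i)).congr fun v => ?_
    simp [Fin.consEquiv, Fin.prod_univ_succ]

lemma hasSum_tsum_ite_eq {α β E : Type*} [DecidableEq β] [NormedAddCommGroup E] [CompleteSpace E]
    {f : α → E} {s : E} (hf : HasSum f s) (g : α → β) :
    HasSum (fun b => ∑' a, if g a = b then f a else 0) s := by
  classical
  convert! hf.tsum_fiberwise g with b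
  simp [tsum_subtype (g ⁻¹' {b}) f, Set.indicator_apply]

lemma pow_card_mul_prod {μ : YoungDiagram} (hμ : μ.rowLen p = 0) (x y : ℝ) :
    x ^ μ.card * ∏ i : Fin p, y ^ μ.rowLen i / (μ.rowLen i)! =
      ∏ i : Fin p, (y * x) ^ μ.rowLen i / (μ.rowLen i)! := by
  rw [card_eq_sum_rowLen hμ, ← prod_pow_eq_pow_sum, ← prod_mul_distrib]
  exact prod_congr rfl fun i _ => by rw [mul_pow]; ring

lemma summable_subtype_hypergeomCoeff (hpq : p ≤ q) (hqn : q ≤ n) (x : ℝ) :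
    Summable fun μ : {μ : YoungDiagram // μ.rowLen p = 0} =>
      x ^ μ.1.card * hypergeomCoeff p q n μ := by
  let rows (μ : {μ : YoungDiagram // μ.rowLen p = 0}) (i : Fin p) : ℕ := μ.1.rowLen i
  have rows_injective : Function.Injective rows := fun μ ν h =>
    Subtype.ext (eq_of_rowLen_eq μ.2 ν.2 (congrFun h))
  have majorant_summable := (summable_pi_prod_of_nonneg
    (Real.summable_pow_div_factorial (p * |x|)) (fun k => by positivity) p).comp_injective
      rows_injective
  refine majorant_summable.of_norm_bounded fun μ => ?_
  rw [norm_mul, norm_pow, Real.norm_eq_abs,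
    Real.norm_of_nonneg (hypergeomCoeff_nonneg hpq hqn μ.2)]
  calc |x| ^ μ.1.card * hypergeomCoeff p q n μ
      ≤ |x| ^ μ.1.card * ∏ i : Fin p, (p : ℝ) ^ μ.1.rowLen i / (μ.1.rowLen i)! := by
        gcongr
        exact hypergeomCoeff_le hpq hqn μ.2
    _ = ∏ i : Fin p, (p * |x|) ^ rows μ i / (rows μ i)! := pow_card_mul_prod μ.2 _ _

lemma support_hypergeomCoeff_subset (p q n : ℕ) (x : ℝ) :
    Function.support (fun μ : YoungDiagram => x ^ μ.card * hypergeomCoeff p q n μ) ⊆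
      {μ | μ.rowLen p = 0} :=
  fun _ hμ => not_not.1 fun hrow =>
    right_ne_zero_of_mul hμ (hypergeomCoeff_eq_zero q n hrow)

lemma summable_hypergeomCoeff (hpq : p ≤ q) (hqn : q ≤ n) (x : ℝ) :
    Summable fun μ : YoungDiagram => x ^ μ.card * hypergeomCoeff p q n μ := by
  obtain ⟨s, hs⟩ := summable_subtype_hypergeomCoeff hpq hqn x
  exact ⟨s, (hasSum_subtype_iff_of_support_subset (support_hypergeomCoeff_subset p q n x)).1 hs⟩

lemma hasSum_wordCoeff (hpq : p ≤ q) (hqn : q ≤ n) (x : ℝ) :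
    HasSum (fun lam : YoungDiagram => x ^ lam.card * wordCoeff p q n lam)
      ((∏ i ∈ Icc 1 p, ((q - i)! : ℝ) / ((n - i)! : ℝ)) * x ^ (p * (n - p)) *
        ∑' μ : YoungDiagram, x ^ μ.card * hypergeomCoeff p q n μ) := by
  have shift_injective : Function.Injective
      fun μ : {μ : YoungDiagram // μ.rowLen p = 0} => addColumns p (n - p) μ :=
    (addColumns_injOn p (n - p)).injective
  have hypergeom_hasSum := (hasSum_subtype_iff_of_support_subset
    (support_hypergeomCoeff_subset p q n x)).2 (summable_hypergeomCoeff hpq hqn x).hasSum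
  refine (shift_injective.hasSum_iff fun lam hlam => ?_).1 ?_
  · by_contra hne
    obtain ⟨μ, hμ, rfl⟩ := exists_addColumns_eq_of_wordCoeff_ne_zero (right_ne_zero_of_mul hne)
    exact hlam ⟨⟨μ, hμ⟩, rfl⟩
  · refine (hypergeom_hasSum.mul_left _).congr_fun fun μ => ?_
    simp only [Function.comp_apply]
    rw [card_addColumns μ.2, wordCoeff_addColumns hpq hqn μ.2, pow_add]
    ring

lemma pow_div_factorial_mul_Pword (hp : p ≠ 0) (x : ℝ) (lam : YoungDiagram) :
    ((p : ℝ) * x) ^ lam.card / (lam.card)! * Pword lam.card p lam =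
      x ^ lam.card * (numSSYT lam p / hookProd lam) := by
  have hhook : (hookProd lam : ℝ) ≠ 0 := Nat.cast_ne_zero.2 (hookProd_pos lam).ne'
  have : (p : ℝ) ≠ 0 := Nat.cast_ne_zero.2 hp
  rw [Pword, fSYT, mul_pow]
  field_simp

lemma word_term_eq_tsum (q n : ℕ) (hp : p ≠ 0) (x : ℝ) (ℓ : ℕ) :
    (if p * (n - p) ≤ ℓ then ((p : ℝ) * x) ^ ℓ / ℓ ! *
        Eword ℓ p (fun lam => indSup n p lam * (Hstrip n p q lam : ℝ)) else 0) =
      ∑' lam : YoungDiagram, if lam.card = ℓ then x ^ lam.card * wordCoeff p q n lam else 0 := by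
  split_ifs with hℓ
  · rw [Eword, ← tsum_mul_left]
    refine tsum_congr fun lam => ?_
    split_ifs with hcard
    · rw [← hcard, ← mul_assoc, pow_div_factorial_mul_Pword hp, wordCoeff, mul_assoc]
    · rw [mul_zero]
  · refine (tsum_zero.symm.trans (tsum_congr fun lam => ?_))
    split_ifs with hcard
    · rw [wordCoeff_eq_zero_of_card_lt q (by omega), mul_zero]
    · rfl

lemma hypergeom_term_eq_tsum (p q n : ℕ) (x : ℝ) (k : ℕ) :
    (x ^ k * ∑' κ : YoungDiagram, if κ.card = k then
        pochPart (p : ℝ) κ * pochPart (q : ℝ) κ /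
          (((hookProd κ : ℝ)) ^ 2 * pochPart (n : ℝ) κ) else 0) =
      ∑' κ : YoungDiagram, if κ.card = k then x ^ κ.card * hypergeomCoeff p q n κ else 0 := by
  rw [← tsum_mul_left]
  refine tsum_congr fun κ => ?_
  split_ifs with hcard
  · rw [hcard, hypergeomCoeff]
  · rw [mul_zero]

end Summation

end

/-- the generating function identity for
`Σ_{ℓ ≥ p(n−p)} ((px)^ℓ/ℓ!) E^{ℓ,p}(1_{λ⊇μ} H(λ))` in terms of the
hypergeometric-type series `Σ_k x^k Σ_{κ ⊢ k} (p)_κ (q)_κ / ((h^κ)² (n)_κ)`. -/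
theorem statement0 (p q n : ℕ) (hp : 1 ≤ p) (hpq : p ≤ q) (hqn : q ≤ n) (x : ℝ) :
    Summable (fun ℓ : ℕ =>
      if p * (n - p) ≤ ℓ then
        ((p : ℝ) * x) ^ ℓ / (Nat.factorial ℓ : ℝ) *
          Eword ℓ p (fun lam => indSup n p lam * (Hstrip n p q lam : ℝ))
      else 0) ∧
    Summable (fun k : ℕ =>
      x ^ k * ∑' κ : YoungDiagram,
        (if κ.card = k then
          pochPart (p : ℝ) κ * pochPart (q : ℝ) κ /
            (((hookProd κ : ℝ)) ^ 2 * pochPart (n : ℝ) κ)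
        else 0)) ∧
    (∑' ℓ : ℕ,
      (if p * (n - p) ≤ ℓ then
        ((p : ℝ) * x) ^ ℓ / (Nat.factorial ℓ : ℝ) *
          Eword ℓ p (fun lam => indSup n p lam * (Hstrip n p q lam : ℝ))
      else 0)) =
      (∏ i ∈ Finset.Icc 1 p,
          (Nat.factorial (q - i) : ℝ) / (Nat.factorial (n - i) : ℝ)) *
        x ^ (p * (n - p)) *
        ∑' k : ℕ,
          x ^ k * ∑' κ : YoungDiagram,
            (if κ.card = k then
              pochPart (p : ℝ) κ * pochPart (q : ℝ) κ /
                (((hookProd κ : ℝ)) ^ 2 * pochPart (n : ℝ) κ)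
            else 0) := by
  have hword := hasSum_tsum_ite_eq (hasSum_wordCoeff hpq hqn x) YoungDiagram.card
  have hhyp := hasSum_tsum_ite_eq (summable_hypergeomCoeff hpq hqn x).hasSum YoungDiagram.card
  simp only [word_term_eq_tsum q n (Nat.one_le_iff_ne_zero.1 hp), hypergeom_term_eq_tsum]
  refine ⟨hword.summable, hhyp.summable, ?_⟩
  rw [hword.tsum_eq, hhyp.tsum_eq]

end
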